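/- Let F_1,…,F_n ∈ ℂ[z_1,…,z_n] be polynomials whose common projective zero set (of their homogenizations) is finite and contained in the affine chart ℂ^n ⊂ ℙ^n (no common zeros at infinity), and let Φ be a polynomial in the ideal (F_1,…,F_n). Then there exist polynomials Q_1,…,Q_n with Φ = Σ_j F_j Q_j and deg(F_j Q_j) ≤ deg Φ for each j. -/

import Mathlib

open MvPolynomial

/-- The `d`-homogenization of `F ∈ ℂ[z_1,…,z_n]`. -/
noncomputable def homogenize (n d : ℕ) (F : MvPolynomial (Fin n) ℂ) :
    MvPolynomial (Fin (n + 1)) ℂ :=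
  ∑ s ∈ F.support,
    monomial (Finsupp.cons (d - s.sum fun _ e => e) s) (MvPolynomial.coeff s F)

/-!
Let `f_j` be the homogenization of `F_j`. The absence of common zeros at infinity says, by the
Nullstellensatz, that the ideal `(z_0, f_1, …, f_n)` contains powers of all `n + 1` variables. These
powers form a regular sequence, so the Koszul complex of the `n + 1` elements `z_0, f_1, …, f_n` is
exact in degree one: all their syzygies are Koszul syzygies. Hence `z_0 p ∈ (f_1, …, f_n)` implies
`p ∈ (f_1, …, f_n)`. If `Φ ∈ (F_1, …, F_n)`, clearing denominators puts `z_0 ^ k` times the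
homogenization of `Φ` into `(f_1, …, f_n)` for some `k`; cancel `z_0 ^ k`, take the homogeneous part
of degree `deg Φ`, and set `z_0 = 1`.
-/

section Koszul

open RingTheory.Sequence
variable {R M : Type*} [CommRing R] [AddCommGroup M] [Module R M]

/-- The differential of the Koszul complex of `φ`, as contraction with `φ` on the whole exterior
algebra; it lowers the degree by one. -/
noncomputable def koszulDifferential (φ : Module.Dual R M) :
    ExteriorAlgebra R M →ₗ[R] ExteriorAlgebra R M :=
  CliffordAlgebra.contractLeft φ

theorem koszulDifferential_ι_mul (φ : Module.Dual R M) (v : M) (x : ExteriorAlgebra R M) :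
    koszulDifferential φ (ExteriorAlgebra.ι R v * x) =
      φ v • x - ExteriorAlgebra.ι R v * koszulDifferential φ x :=
  CliffordAlgebra.contractLeft_ι_mul φ v x

theorem koszulDifferential_ι (φ : Module.Dual R M) (v : M) :
    koszulDifferential φ (ExteriorAlgebra.ι R v) = algebraMap R _ (φ v) :=
  CliffordAlgebra.contractLeft_ι _ φ v

theorem koszulDifferential_koszulDifferential (φ : Module.Dual R M) (x : ExteriorAlgebra R M) :
    koszulDifferential φ (koszulDifferential φ x) = 0 :=
  CliffordAlgebra.contractLeft_contractLeft φ x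

theorem exteriorPower_one : ⋀[R]^1 M = LinearMap.range (ExteriorAlgebra.ι R) :=
  pow_one _

theorem exteriorPower_succ (i : ℕ) :
    ⋀[R]^(i + 1) M = LinearMap.range (ExteriorAlgebra.ι R) * ⋀[R]^i M :=
  pow_succ' _ _

theorem ι_mul_mem_exteriorPower (v : M) {i : ℕ} {x : ExteriorAlgebra R M} (hx : x ∈ ⋀[R]^i M) :
    ExteriorAlgebra.ι R v * x ∈ ⋀[R]^(i + 1) M := by
  rw [exteriorPower_succ]
  exact Submodule.mul_mem_mul (LinearMap.mem_range_self _ v) hx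

theorem map_koszulDifferential_exteriorPower_le (φ : Module.Dual R M) (i : ℕ) :
    (⋀[R]^(i + 1) M).map (koszulDifferential φ) ≤ ⋀[R]^i M := by
  rw [Submodule.map_le_iff_le_comap]
  induction i with
  | zero =>
    rw [exteriorPower_one]
    rintro _ ⟨v, rfl⟩
    rw [Submodule.mem_comap, koszulDifferential_ι]
    exact (pow_zero (LinearMap.range (ExteriorAlgebra.ι R))).ge (Submodule.algebraMap_mem _)
  | succ i ih =>
    rw [exteriorPower_succ]
    refine Submodule.mul_le.2 ?_
    rintro _ ⟨v, rfl⟩ x hx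
    rw [Submodule.mem_comap, koszulDifferential_ι_mul]
    exact sub_mem (Submodule.smul_mem _ _ hx) (ι_mul_mem_exteriorPower v (ih hx))

theorem koszulDifferential_mem_smul (φ : Module.Dual R M) {J : Ideal R} {i : ℕ}
    {x : ExteriorAlgebra R M} (hx : x ∈ J • ⋀[R]^(i + 1) M) :
    koszulDifferential φ x ∈ J • ⋀[R]^i M := by
  have hmap := Submodule.mem_map_of_mem (f := koszulDifferential φ) hx
  rw [Submodule.map_smul''] at hmap
  exact Submodule.smul_mono le_rfl (map_koszulDifferential_exteriorPower_le φ i) hmap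

theorem ι_mul_mem_smul (v : M) {J : Ideal R} {i : ℕ} {x : ExteriorAlgebra R M}
    (hx : x ∈ J • ⋀[R]^i M) : ExteriorAlgebra.ι R v * x ∈ J • ⋀[R]^(i + 1) M := by
  induction hx using Submodule.smul_induction_on' with
  | smul r hr y hy =>
    rw [mul_smul_comm]
    exact Submodule.smul_mem_smul hr (ι_mul_mem_exteriorPower v hy)
  | add x _ y _ hx hy =>
    rw [mul_add]
    exact add_mem hx hy

/-- Vanishing of the homology in degree `i + 1` of the Koszul complex of `φ` with coefficients in
`R ⧸ J`, phrased inside the exterior algebra of `M`. -/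
def KoszulExactMod (φ : Module.Dual R M) (J : Ideal R) (i : ℕ) : Prop :=
  ∀ w ∈ ⋀[R]^(i + 1) M, koszulDifferential φ w ∈ J • ⋀[R]^i M →
    ∃ y ∈ ⋀[R]^(i + 2) M, w - koszulDifferential φ y ∈ J • ⋀[R]^(i + 1) M

theorem KoszulExactMod.of_sup_span_singleton {φ : Module.Dual R M} {J : Ideal R} {i : ℕ} {c : M}
    (hreg : ∀ z ∈ ⋀[R]^(i + 1) M, φ c • z ∈ J • ⋀[R]^(i + 1) M → z ∈ J • ⋀[R]^(i + 1) M)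
    (h : KoszulExactMod φ (J ⊔ Ideal.span {φ c}) (i + 1)) : KoszulExactMod φ J i := by
  intro w hw hdw
  have hcycle : koszulDifferential φ (ExteriorAlgebra.ι R c * w) ∈
      (J ⊔ Ideal.span {φ c}) • ⋀[R]^(i + 1) M := by
    rw [koszulDifferential_ι_mul, Submodule.sup_smul]
    exact sub_mem
      (Submodule.mem_sup_right (Submodule.smul_mem_smul (Ideal.mem_span_singleton_self _) hw))
      (Submodule.mem_sup_left (ι_mul_mem_smul c hdw))
  -- As `φ c` acts as zero on homology, `c ∧ w` is a cycle modulo `J` and `φ c`. Applying the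
  -- differential to a primitive of it exhibits `φ c • w` as a boundary modulo `J`.
  obtain ⟨u, _, hcu⟩ := h _ (ι_mul_mem_exteriorPower c hw) hcycle
  rw [Submodule.sup_smul, Submodule.mem_sup] at hcu
  obtain ⟨j, hj, z, hz, hjz⟩ := hcu
  rw [Submodule.ideal_span_singleton_smul, Submodule.mem_smul_pointwise_iff_exists] at hz
  obtain ⟨y, hy, rfl⟩ := hz
  refine ⟨y, hy, hreg _ (sub_mem hw ?_) ?_⟩
  · exact map_koszulDifferential_exteriorPower_le φ (i + 1) (Submodule.mem_map_of_mem hy)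
  · have hd := congrArg (koszulDifferential φ) hjz
    simp only [map_add, map_sub, map_smul, koszulDifferential_koszulDifferential, sub_zero,
      koszulDifferential_ι_mul] at hd
    have : φ c • (w - koszulDifferential φ y) =
        koszulDifferential φ j + ExteriorAlgebra.ι R c * koszulDifferential φ w := by
      rw [smul_sub, sub_eq_iff_eq_add, add_right_comm, hd, sub_add_cancel]
    rw [this]
    exact add_mem (koszulDifferential_mem_smul φ hj) (ι_mul_mem_smul c hdw)

theorem mem_smul_of_isWeaklyRegular {P : Submodule R M} [Module.Flat R P] {rs : List R}
    (hrs : IsWeaklyRegular R rs) {k : ℕ} (hk : k < rs.length) {z : M} (hz : z ∈ P)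
    (h : rs[k] • z ∈ Ideal.ofList (rs.take k) • P) : z ∈ Ideal.ofList (rs.take k) • P := by
  have hP : IsWeaklyRegular P rs :=
    ((TensorProduct.rid R P).isWeaklyRegular_congr rs).1 hrs.isWeaklyRegular_lTensor
  have := (isSMulRegular_quotient_iff_mem_of_smul_mem _ _).1 (hP.regular_mod_prev k hk) ⟨z, hz⟩
  simp only [Submodule.mem_smul_top_iff] at this
  exact this h

theorem koszulExactMod_ofList_take [Module.Free R M] {φ : Module.Dual R M} {rs : List R}
    (hrs : IsWeaklyRegular R rs) (hφ : ∀ r ∈ rs, r ∈ LinearMap.range φ)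
    (htop : ⋀[R]^(rs.length + 1) M = ⊥) {k : ℕ} (hk : k ≤ rs.length) :
    KoszulExactMod φ (Ideal.ofList (rs.take k)) k := by
  induction hk using Nat.decreasingInduction with
  | self =>
    intro w hw _
    rw [htop, Submodule.mem_bot] at hw
    exact ⟨0, zero_mem _, by simp [hw]⟩
  | of_succ k hk ih =>
    obtain ⟨c, hc⟩ := hφ _ (List.getElem_mem hk)
    refine KoszulExactMod.of_sup_span_singleton (c := c) (fun z hz h => ?_) ?_
    · exact mem_smul_of_isWeaklyRegular hrs hk hz (hc ▸ h)
    · rwa [hc, ← Ideal.ofList_singleton, ← Ideal.ofList_append, List.take_append_getElem]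

/-- The Koszul (or trivial) syzygies of `φ`: the submodule of `ker φ` generated by the relations
that hold because `R` is commutative. -/
def koszulSyzygies (φ : Module.Dual R M) : Submodule R M :=
  Submodule.span R (Set.range fun p : M × M => φ p.1 • p.2 - φ p.2 • p.1)

theorem map_koszulDifferential_exteriorPower_two_le (φ : Module.Dual R M) :
    (⋀[R]^2 M).map (koszulDifferential φ) ≤
      (koszulSyzygies φ).map (ExteriorAlgebra.ι R) := by
  rw [Submodule.map_le_iff_le_comap, exteriorPower_succ, exteriorPower_one]
  refine Submodule.mul_le.2 ?_
  rintro _ ⟨v, rfl⟩ _ ⟨w, rfl⟩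
  refine ⟨φ v • w - φ w • v, Submodule.subset_span ⟨(v, w), rfl⟩, ?_⟩
  rw [koszulDifferential_ι_mul, koszulDifferential_ι, ← Algebra.commutes, ← Algebra.smul_def,
    map_sub, map_smul, map_smul]

theorem ker_le_koszulSyzygies_of_isWeaklyRegular [Module.Free R M] {φ : Module.Dual R M}
    {rs : List R} (hrs : IsWeaklyRegular R rs) (hφ : ∀ r ∈ rs, r ∈ LinearMap.range φ)
    (htop : ⋀[R]^(rs.length + 1) M = ⊥) :
    LinearMap.ker φ ≤ koszulSyzygies φ := by
  intro a ha
  have hι : ExteriorAlgebra.ι R a ∈ ⋀[R]^1 M := by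
    rw [exteriorPower_one]
    exact LinearMap.mem_range_self _ a
  obtain ⟨y, hy, hay⟩ := koszulExactMod_ofList_take hrs hφ htop (Nat.zero_le _) _ hι (by
    rw [koszulDifferential_ι, LinearMap.mem_ker.1 ha, map_zero]
    exact zero_mem _)
  rw [List.take_zero, Ideal.ofList_nil, Submodule.bot_smul, Submodule.mem_bot, sub_eq_zero] at hay
  obtain ⟨b, hb, hab⟩ :=
    map_koszulDifferential_exteriorPower_two_le φ (Submodule.mem_map_of_mem hy)
  rwa [← ExteriorAlgebra.ι_leftInverse.injective (hab.trans hay.symm)]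

theorem exteriorPower_eq_bot_of_card_lt {ι : Type*} [Fintype ι] [LinearOrder ι]
    (b : Module.Basis ι R M) {i : ℕ} (hi : Fintype.card ι < i) : ⋀[R]^i M = ⊥ := by
  have : IsEmpty (Set.powersetCard ι i) :=
    ⟨fun s => (s.1.card_le_univ.trans_lt hi).ne s.2⟩
  have := (b.exteriorPower i).repr.injective.subsingleton
  exact (Submodule.subsingleton_iff_eq_bot).1 this

theorem isSMulRegular_quotient_span_range {n : ℕ} {a : R} {f : Fin n → R} {rs : List R}
    (hrs : IsWeaklyRegular R rs) (hn : n < rs.length)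
    (hmem : ∀ r ∈ rs, r ∈ Ideal.span (insert a (Set.range f))) :
    IsSMulRegular (R ⧸ Ideal.span (Set.range f)) a := by
  let φ : Module.Dual R (Fin (n + 1) → R) := Fintype.linearCombination R (Fin.cons a f : _ → R)
  have hφ (v) : φ v = v 0 * a + ∑ j, v j.succ * f j := by
    simp [φ, Fintype.linearCombination_apply, Fin.sum_univ_succ]
  have hrange (r) (hr : r ∈ rs) : r ∈ LinearMap.range φ := by
    rw [Fintype.range_linearCombination, Fin.range_cons]
    exact hmem r hr
  have hker := ker_le_koszulSyzygies_of_isWeaklyRegular hrs hrange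
    (exteriorPower_eq_bot_of_card_lt (Pi.basisFun R (Fin (n + 1))) (by simpa using hn))
  have hle : koszulSyzygies φ ≤
      Submodule.comap (LinearMap.proj 0) (Ideal.span (Set.range f)) := by
    rw [koszulSyzygies, Submodule.span_le]
    rintro _ ⟨⟨v, w⟩, rfl⟩
    have hsum (v : Fin (n + 1) → R) : ∑ j, v j.succ * f j ∈ Ideal.span (Set.range f) :=
      Ideal.mem_span_range_iff_exists_fun.2 ⟨_, rfl⟩
    have hcancel : (φ v • w - φ w • v) 0 =
        w 0 * ∑ j, v j.succ * f j - v 0 * ∑ j, w j.succ * f j := by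
      simp only [hφ, Pi.sub_apply, Pi.smul_apply, smul_eq_mul]
      ring
    change (φ v • w - φ w • v) 0 ∈ Ideal.span (Set.range f)
    rw [hcancel]
    exact sub_mem (Ideal.mul_mem_left _ _ (hsum v)) (Ideal.mul_mem_left _ _ (hsum w))
  rw [isSMulRegular_quotient_iff_mem_of_smul_mem]
  intro p hp
  obtain ⟨q, hq⟩ := Ideal.mem_span_range_iff_exists_fun.1 hp
  have hsyzygy : φ (Fin.cons p (-q)) = 0 := by
    rw [smul_eq_mul, mul_comm] at hq
    simp [hφ, hq]
  exact hle (hker hsyzygy)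

end Koszul

section PowersOfVariables

open RingTheory.Sequence
variable {R : Type*} [CommRing R]

theorem mem_span_image_X_pow_iff {σ : Type*} {N : σ → ℕ} {s : Set σ} {p : MvPolynomial σ R} :
    p ∈ Ideal.span ((fun j => X j ^ N j) '' s) ↔ ∀ m ∈ p.support, ∃ j ∈ s, N j ≤ m j := by
  have himage : (fun j => (X j : MvPolynomial σ R) ^ N j) '' s =
      (fun m => monomial m 1) '' ((fun j => Finsupp.single j (N j)) '' s) := by
    simp only [Set.image_image, X_pow_eq_monomial]
  rw [himage, mem_ideal_span_monomial_image]
  simp only [Set.exists_mem_image, Finsupp.single_le_iff]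

theorem isSMulRegular_quotient_span_image_X_pow {σ : Type*} (N : σ → ℕ) {s : Set σ} {i : σ}
    (hi : i ∉ s) :
    IsSMulRegular (MvPolynomial σ R ⧸ Ideal.span ((fun j => (X j : MvPolynomial σ R) ^ N j) '' s))
      (X i ^ N i : MvPolynomial σ R) := by
  rw [isSMulRegular_quotient_iff_mem_of_smul_mem]
  intro p hp
  rw [mem_span_image_X_pow_iff] at hp ⊢
  intro m hm
  obtain ⟨j, hj, hle⟩ := hp (Finsupp.single i (N i) + m) (by
    rw [mem_support_iff, smul_eq_mul, X_pow_eq_monomial, coeff_monomial_mul, one_mul]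
    exact mem_support_iff.1 hm)
  have hij : i ≠ j := fun h => hi (h ▸ hj)
  exact ⟨j, hj, by simpa [Finsupp.single_apply, hij] using hle⟩

theorem ofList_take_ofFn {n : ℕ} (f : Fin n → R) (k : ℕ) :
    Ideal.ofList ((List.ofFn f).take k) = Ideal.span (f '' {j | (j : ℕ) < k}) := by
  refine congrArg Ideal.span (Set.ext fun r => ?_)
  simp only [Set.mem_ofPred_eq, List.mem_take_iff_getElem, List.length_ofFn, List.getElem_ofFn,
    Set.mem_image, Fin.exists_iff, lt_min_iff]
  grind

theorem isWeaklyRegular_ofFn_X_pow {n : ℕ} (N : Fin n → ℕ) :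
    IsWeaklyRegular (MvPolynomial (Fin n) R)
      (List.ofFn fun i => (X i : MvPolynomial (Fin n) R) ^ N i) := by
  refine ⟨fun k hk => ?_⟩
  have hkn : k < n := by simpa using hk
  rw [ofList_take_ofFn, smul_eq_mul, Ideal.mul_top, List.getElem_ofFn]
  exact isSMulRegular_quotient_span_image_X_pow N (i := ⟨k, hkn⟩) (by simp)

theorem isSMulRegular_quotient_of_X_mem_radical {n : ℕ} {a : MvPolynomial (Fin (n + 1)) R}
    {f : Fin n → MvPolynomial (Fin (n + 1)) R}
    (h : ∀ i, X i ∈ (Ideal.span (insert a (Set.range f))).radical) :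
    IsSMulRegular (MvPolynomial (Fin (n + 1)) R ⧸ Ideal.span (Set.range f)) a := by
  choose N hN using h
  refine isSMulRegular_quotient_span_range (isWeaklyRegular_ofFn_X_pow N) (by simp) ?_
  rintro _ hr
  obtain ⟨i, rfl⟩ := List.mem_ofFn.1 hr
  exact hN i

end PowersOfVariables

section Homogenization

variable {R : Type*} [CommSemiring R] {n : ℕ}

theorem degree_finsuppCons (k : ℕ) (s : Fin n →₀ ℕ) : (s.cons k).degree = k + s.degree := by
  simp [Finsupp.degree_eq_sum, Fin.sum_univ_succ]

/-- The `d`-homogenization with respect to the additional variable `X 0`. Since `d - s.degree` is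
a truncated subtraction, the result is homogeneous of degree `d` only on polynomials of degree at
most `d`. -/
noncomputable def homogenization (d : ℕ) :
    MvPolynomial (Fin n) R →ₗ[R] MvPolynomial (Fin (n + 1)) R :=
  (basisMonomials (Fin n) R).constr R fun s => monomial (s.cons (d - s.degree)) 1

/-- Restriction to the affine chart `X 0 = 1`. -/
noncomputable def dehomogenization : MvPolynomial (Fin (n + 1)) R →ₐ[R] MvPolynomial (Fin n) R :=
  aeval (Fin.cons 1 X)

theorem homogenization_monomial (d : ℕ) (s : Fin n →₀ ℕ) (c : R) :
    homogenization d (monomial s c) = monomial (s.cons (d - s.degree)) c := by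
  have hs : homogenization d (monomial s (1 : R)) = monomial (s.cons (d - s.degree)) 1 := by
    rw [← congrFun (coe_basisMonomials (Fin n) R) s, homogenization, Module.Basis.constr_basis]
  rw [← mul_one c, ← smul_eq_mul, ← smul_monomial, map_smul, hs, smul_monomial]

theorem dehomogenization_X_zero : dehomogenization (X 0 : MvPolynomial (Fin (n + 1)) R) = 1 := by
  simp [dehomogenization]

theorem dehomogenization_monomial (s : Fin (n + 1) →₀ ℕ) (c : R) :
    dehomogenization (monomial s c) = monomial s.tail c := by
  rw [dehomogenization, aeval_monomial, Finsupp.prod_fintype _ _ (by simp), Fin.prod_univ_succ,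
    monomial_eq, Finsupp.prod_fintype _ _ (by simp)]
  simp [algebraMap_eq, Finsupp.tail_apply]

theorem dehomogenization_homogenization (d : ℕ) (F : MvPolynomial (Fin n) R) :
    dehomogenization (homogenization d F) = F := by
  conv_rhs => rw [F.as_sum]
  conv_lhs => rw [F.as_sum]
  simp only [map_sum, homogenization_monomial, dehomogenization_monomial, Finsupp.tail_cons]

theorem isHomogeneous_homogenization {d : ℕ} {F : MvPolynomial (Fin n) R} (hF : F.totalDegree ≤ d) :
    (homogenization d F).IsHomogeneous d := by
  rw [F.as_sum, map_sum]
  refine IsHomogeneous.sum _ _ _ fun s hs => ?_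
  rw [homogenization_monomial]
  refine isHomogeneous_monomial _ ?_
  rw [degree_finsuppCons]
  exact Nat.sub_add_cancel ((le_totalDegree hs).trans hF)

theorem homogenization_dehomogenization {d : ℕ} {p : MvPolynomial (Fin (n + 1)) R}
    (hp : p.IsHomogeneous d) : homogenization d (dehomogenization p) = p := by
  conv_lhs => rw [p.as_sum]
  conv_rhs => rw [p.as_sum]
  simp only [map_sum, dehomogenization_monomial, homogenization_monomial]
  refine Finset.sum_congr rfl fun s hs => ?_
  have hdeg : d - s.tail.degree = s 0 := by
    have hs : s.degree = d := (hp.degree_eq_sum_deg_support hs).symm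
    rw [← hs, ← s.cons_tail, degree_finsuppCons, Finsupp.cons_zero, Finsupp.tail_cons,
      Nat.add_sub_cancel]
  rw [hdeg, Finsupp.cons_tail]

theorem totalDegree_dehomogenization_le (p : MvPolynomial (Fin (n + 1)) R) :
    (dehomogenization p).totalDegree ≤ p.totalDegree := by
  conv_lhs => rw [p.as_sum, map_sum]
  refine totalDegree_finsetSum_le fun s hs => ?_
  rw [dehomogenization_monomial]
  have htail : s.tail.degree ≤ s.degree := by
    conv_rhs => rw [← s.cons_tail, degree_finsuppCons]
    exact Nat.le_add_left _ _
  exact (totalDegree_monomial_le _ _).trans (htail.trans (le_totalDegree hs))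

theorem eq_of_dehomogenization_eq {p q : MvPolynomial (Fin (n + 1)) R} {d : ℕ}
    (hp : p.IsHomogeneous d) (hq : q.IsHomogeneous d)
    (h : dehomogenization p = dehomogenization q) : p = q := by
  rw [← homogenization_dehomogenization hp, h, homogenization_dehomogenization hq]

theorem exists_X_zero_pow_mul_mem_span {ι : Type*} [Finite ι]
    {f : ι → MvPolynomial (Fin (n + 1)) R} {d : ι → ℕ} (hf : ∀ j, (f j).IsHomogeneous (d j))
    {p : MvPolynomial (Fin (n + 1)) R} {e : ℕ} (hp : p.IsHomogeneous e)
    (hmem : dehomogenization p ∈ Ideal.span (Set.range fun j => dehomogenization (f j))) :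
    ∃ k, X 0 ^ k * p ∈ Ideal.span (Set.range f) := by
  have := Fintype.ofFinite ι
  obtain ⟨c, hc⟩ := Ideal.mem_span_range_iff_exists_fun.1 hmem
  let N := ∑ j, (c j).totalDegree
  let D := ∑ j, d j
  let q j := X 0 ^ (D - d j + e) * homogenization N (c j)
  have hq (j) : (q j * f j).IsHomogeneous (N + D + e) := by
    have hN : (c j).totalDegree ≤ N :=
      Finset.single_le_sum (f := fun j => (c j).totalDegree) (fun _ _ => Nat.zero_le _)
        (Finset.mem_univ j)
    have hD : d j ≤ D := Finset.single_le_sum (fun _ _ => Nat.zero_le _) (Finset.mem_univ j)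
    convert ((isHomogeneous_X_pow 0 _).mul (isHomogeneous_homogenization hN)).mul (hf j) using 1
    omega
  have heq : X 0 ^ (N + D) * p = ∑ j, q j * f j := by
    refine eq_of_dehomogenization_eq ((isHomogeneous_X_pow 0 _).mul hp)
      (IsHomogeneous.sum _ _ _ fun j _ => hq j) ?_
    simp [q, dehomogenization_X_zero, dehomogenization_homogenization, hc]
  exact ⟨N + D, heq ▸ Ideal.mem_span_range_iff_exists_fun.2 ⟨q, rfl⟩⟩

end Homogenization

attribute [local instance] MvPolynomial.gradedAlgebra in
theorem dvd_homogeneousComponent_mul {R σ : Type*} [CommSemiring R] {p : MvPolynomial σ R} {d : ℕ}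
    (hp : p.IsHomogeneous d) (q : MvPolynomial σ R) (e : ℕ) :
    p ∣ homogeneousComponent e (p * q) := by
  have hspan : (Ideal.span {p}).IsHomogeneous (homogeneousSubmodule σ R) :=
    Ideal.homogeneous_span _ _ fun _ hr => ⟨d, (mem_homogeneousSubmodule d _).2 (by simp_all)⟩
  exact Ideal.mem_span_singleton.1 (homogeneousComponent_mem_of_mem hspan
    (Ideal.mem_span_singleton.2 (dvd_mul_right p q)) e)

theorem exists_isHomogeneous_mul_of_mem_span {R σ ι : Type*} [CommSemiring R] [Fintype ι]
    {f : ι → MvPolynomial σ R} {d : ι → ℕ} (hf : ∀ j, (f j).IsHomogeneous (d j))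
    {p : MvPolynomial σ R} {e : ℕ} (hp : p.IsHomogeneous e) (hmem : p ∈ Ideal.span (Set.range f)) :
    ∃ q : ι → MvPolynomial σ R, p = ∑ j, f j * q j ∧ ∀ j, (f j * q j).IsHomogeneous e := by
  obtain ⟨c, hc⟩ := Ideal.mem_span_range_iff_exists_fun.1 hmem
  choose q hq using fun j => dvd_homogeneousComponent_mul (hf j) (c j) e
  refine ⟨q, ?_, fun j => ?_⟩
  · rw [← homogeneousComponent_eq_self hp, ← hc, map_sum]
    simp only [← hq, mul_comm]
  · rw [← hq]
    exact homogeneousComponent_isHomogeneous e _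

theorem max_noether_general {R : Type*} [CommRing R] {n : ℕ}
    (F : Fin n → MvPolynomial (Fin n) R) (Φ : MvPolynomial (Fin n) R)
    (hF : ∀ i, X i ∈ (Ideal.span (insert (X 0) (Set.range fun j =>
      homogenization (F j).totalDegree (F j)))).radical)
    (hΦ : Φ ∈ Ideal.span (Set.range F)) :
    ∃ Q : Fin n → MvPolynomial (Fin n) R,
      Φ = ∑ j, F j * Q j ∧ ∀ j, (F j * Q j).totalDegree ≤ Φ.totalDegree := by
  let f j := homogenization (F j).totalDegree (F j)
  have hf (j) : (f j).IsHomogeneous (F j).totalDegree := isHomogeneous_homogenization le_rfl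
  have hδf (j) : dehomogenization (f j) = F j := dehomogenization_homogenization _ _
  have hp : (homogenization Φ.totalDegree Φ).IsHomogeneous Φ.totalDegree :=
    isHomogeneous_homogenization le_rfl
  obtain ⟨k, hk⟩ := exists_X_zero_pow_mul_mem_span hf hp
    (by simpa only [hδf, dehomogenization_homogenization] using hΦ)
  have hreg := isSMulRegular_quotient_of_X_mem_radical hF
  obtain ⟨q, hq, hdeg⟩ := exists_isHomogeneous_mul_of_mem_span hf hp
    (mem_of_isSMulRegular_quotient_of_smul_mem (hreg.pow k) hk)
  refine ⟨fun j => dehomogenization (q j), ?_, fun j => ?_⟩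
  · simpa [hδf, dehomogenization_homogenization] using congrArg dehomogenization hq
  · rw [← hδf, ← map_mul]
    exact (totalDegree_dehomogenization_le _).trans (hdeg j).totalDegree_le

theorem X_mem_radical_span_insert {K σ ι : Type*} [Field K] [IsAlgClosed K] [Finite σ] {o : σ}
    {f : ι → MvPolynomial σ K}
    (h : ∀ z : σ → K, z ≠ 0 → (∀ j, eval z (f j) = 0) → z o ≠ 0) (i : σ) :
    X i ∈ (Ideal.span (insert (X o) (Set.range f))).radical := by
  rw [← vanishingIdeal_zeroLocus_eq_radical (K := K), zeroLocus_span]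
  intro z hz
  have hzero : z = 0 := by
    by_contra hne
    simp only [aeval_eq_eval, Set.forall_mem_insert, Set.forall_mem_range, Set.mem_ofPred_eq] at hz
    exact h z hne hz.2 (by simpa using hz.1)
  simp [hzero]

theorem homogenize_eq_homogenization {n : ℕ} (d : ℕ) (F : MvPolynomial (Fin n) ℂ) :
    homogenize n d F = homogenization d F := by
  conv_rhs => rw [F.as_sum, map_sum]
  simp only [homogenization_monomial]
  rfl

/-- Max Nöther's theorem (1873): if the common projective zero set of `F_1,…,F_n` is
finite and contained in the affine chart `ℂ^n ⊆ ℙ^n` (no common zeros at infinity), and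
`Φ ∈ (F_1,…,F_n)`, then `Φ = Σ_j F_j Q_j` with `deg (F_j Q_j) ≤ deg Φ`. -/
theorem max_noether (n : ℕ) (F : Fin n → MvPolynomial (Fin n) ℂ)
    (Φ : MvPolynomial (Fin n) ℂ)
    -- every nonzero common zero of the homogenizations lies in the affine chart
    (haffine : ∀ z : Fin (n + 1) → ℂ, z ≠ 0 →
      (∀ j, eval z (homogenize n ((F j).totalDegree) (F j)) = 0) → z 0 ≠ 0)
    -- the common projective zero set is finite
    (hfinite : {z : Fin (n + 1) → ℂ |
      (∀ j, eval z (homogenize n ((F j).totalDegree) (F j)) = 0) ∧ z 0 = 1}.Finite)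
    (hΦ : Φ ∈ Ideal.span (Set.range F)) :
    ∃ Q : Fin n → MvPolynomial (Fin n) ℂ,
      Φ = ∑ j, F j * Q j ∧ ∀ j, (F j * Q j).totalDegree ≤ Φ.totalDegree := by
  simp only [homogenize_eq_homogenization] at haffine
  exact max_noether_general F Φ (X_mem_radical_span_insert haffine) hΦ
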